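/- arXiv:1908.05583 — 2 statements merged into one kernel-verified Lean document; each statement's English description precedes it below -/
import Mathlib

section
/- The regularized maximum preserves lower bounds on Levi forms: let Ω ⊆ ℂ^n be open, let u_1,…,u_p : Ω → ℝ be C^2 functions, and let γ : Ω × ℂ^n → ℝ be a function such that for every j, every z ∈ Ω and every ξ ∈ ℂ^n, (1/4)(D²u_j(z)(ξ,ξ) + D²u_j(z)(iξ,iξ)) ≥ γ(z,ξ), where D²u_j(z) denotes the second (real) Fréchet derivative of u_j at z, viewed as a real bilinear form on ℂ^n ≅ ℝ^{2n}. Then the function u(z) = M_η(u_1(z),…,u_p(z)) is C^2 on Ω and satisfies (1/4)(D²u(z)(ξ,ξ) + D²u(z)(iξ,iξ)) ≥ γ(z,ξ) for every z ∈ Ω and ξ ∈ ℂ^n. (The quantity (1/4)(D²u(z)(ξ,ξ) + D²u(z)(iξ,iξ)) equals the Levi form, i.e. the complex Hessian ∑_{i,j} ∂²u/∂z_i∂z̄_j(z) ξ_i ξ̄_j, of u at z applied to ξ.) -/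
open MeasureTheory

/-!
Write `M` for the regularized maximum and `U = (u₁, …, u_p)`. The second-order chain rule reads
`D²(M ∘ U)(ξ, ξ) = D²M(DU ξ, DU ξ) + DM(D²U(ξ, ξ))`. The first term is nonnegative because `M` is
convex, so the Levi form of `M ∘ U` is at least `DM(v)`, where `v j` is the Levi form of `u_j`.
Since `M` is non-decreasing and satisfies `M (t + (c, …, c)) = M t + c`, a bound `v j ≥ c` for all
`j` gives `DM(v) ≥ DM(c, …, c) = c`.
-/

section Derivatives

theorem iteratedFDerivWithin_two_comp_apply {𝕜 E F G : Type*} [NontriviallyNormedField 𝕜]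
    [NormedAddCommGroup E] [NormedSpace 𝕜 E] [NormedAddCommGroup F] [NormedSpace 𝕜 F]
    [NormedAddCommGroup G] [NormedSpace 𝕜 G] {g : F → G} {f : E → F} {s : Set E} {x : E}
    (hg : ContDiff 𝕜 2 g) (hf : ContDiffOn 𝕜 2 f s) (hs : UniqueDiffOn 𝕜 s) (hx : x ∈ s)
    (v w : E) :
    iteratedFDerivWithin 𝕜 2 (g ∘ f) s x ![v, w] =
      iteratedFDeriv 𝕜 2 g (f x) ![fderivWithin 𝕜 f s x v, fderivWithin 𝕜 f s x w] +
        fderiv 𝕜 g (f x) (iteratedFDerivWithin 𝕜 2 f s x ![v, w]) := by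
  have hDf : HasFDerivWithinAt f (fderivWithin 𝕜 f s x) s x :=
    (hf.differentiableOn two_ne_zero x hx).hasFDerivWithinAt
  have hDDf : HasFDerivWithinAt (fderivWithin 𝕜 f s)
      (fderivWithin 𝕜 (fderivWithin 𝕜 f s) s x) s x :=
    ((hf.fderivWithin hs (m := 1) (by norm_num)).differentiableOn one_ne_zero x
      hx).hasFDerivWithinAt
  have hDDg : HasFDerivAt (fderiv 𝕜 g) (fderiv 𝕜 (fderiv 𝕜 g) (f x)) (f x) :=
    ((hg.fderiv_right (m := 1) (by norm_num)).differentiable one_ne_zero _).hasFDerivAt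
  have chain_rule : ∀ y ∈ s,
      fderivWithin 𝕜 (g ∘ f) s y = (fderiv 𝕜 g (f y)).comp (fderivWithin 𝕜 f s y) := fun y hy =>
    fderiv_comp_fderivWithin y (hg.differentiable two_ne_zero _)
      (hf.differentiableOn two_ne_zero y hy) (hs y hy)
  have chain_rule₂ := ((hDDg.comp_hasFDerivWithinAt x hDf).clm_comp hDDf).congr chain_rule
    (chain_rule x hx)
  rw [iteratedFDerivWithin_two_apply _ hs hx, iteratedFDerivWithin_two_apply _ hs hx,
    iteratedFDeriv_two_apply, chain_rule₂.fderivWithin (hs x hx)]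
  simp [add_comm]

variable {E : Type*} [NormedAddCommGroup E] [NormedSpace ℝ E] {f : E → ℝ}

theorem iteratedFDeriv_two_nonneg_of_convexOn (hf : ContDiff ℝ 2 f)
    (hconv : ConvexOn ℝ Set.univ f) (x v : E) : 0 ≤ iteratedFDeriv ℝ 2 f x ![v, v] := by
  have hD : ∀ t : ℝ, HasDerivAt (fun t : ℝ => f (x + t • v)) (fderiv ℝ f (x + t • v) v) t :=
    fun t => (hf.differentiable two_ne_zero _).hasFDerivAt.comp_hasDerivAt t <| by
      simpa using ((hasDerivAt_id t).smul_const v).const_add x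
  have hDD : HasDerivAt (fun t : ℝ => fderiv ℝ f (x + t • v) v)
      (fderiv ℝ (fderiv ℝ f) x v v) 0 := by
    have hf' : HasDerivAt (fun t : ℝ => fderiv ℝ f (x + t • v)) (fderiv ℝ (fderiv ℝ f) x v) 0 :=
      ((hf.fderiv_right (m := 1) (by norm_num)).differentiable one_ne_zero
        x).hasFDerivAt.hasLineDerivAt v
    simpa using hf'.clm_apply (hasDerivAt_const (0 : ℝ) v)
  have hline : ConvexOn ℝ Set.univ (fun t : ℝ => f (x + t • v)) := by
    simpa [Function.comp_def, AffineMap.lineMap_apply, add_comm] using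
      hconv.comp_affineMap (AffineMap.lineMap x (x + v))
  have hmono : Monotone (fun t : ℝ => fderiv ℝ f (x + t • v) v) := by
    simpa only [monotoneOn_univ, funext fun t => (hD t).deriv] using
      hline.monotoneOn_deriv fun t _ => (hD t).differentiableAt
  have hnonneg : 0 ≤ fderiv ℝ (fderiv ℝ f) x v v := by
    simpa only [hDD.deriv] using hmono.deriv_nonneg (x := 0)
  simpa [iteratedFDeriv_two_apply] using hnonneg

theorem fderiv_apply_nonneg_of_monotone [PartialOrder E] [IsOrderedAddMonoid E]
    [IsOrderedModule ℝ E] {x v : E} (hf : DifferentiableAt ℝ f x) (hmono : Monotone f)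
    (hv : 0 ≤ v) : 0 ≤ fderiv ℝ f x v := by
  have hline : Monotone fun t : ℝ => f (x + t • v) := fun _ _ h => hmono (by gcongr)
  have hD : HasDerivAt (fun t : ℝ => f (x + t • v)) (fderiv ℝ f x v) 0 :=
    hf.hasFDerivAt.hasLineDerivAt v
  simpa only [hD.deriv] using hline.deriv_nonneg (x := 0)

theorem fderiv_apply_eq_of_forall_add_smul {x v : E} {c : ℝ} (hf : DifferentiableAt ℝ f x)
    (hadd : ∀ t : ℝ, f (x + t • v) = f x + t * c) : fderiv ℝ f x v = c := by
  have hD : HasDerivAt (fun t : ℝ => f (x + t • v)) (fderiv ℝ f x v) 0 :=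
    hf.hasFDerivAt.hasLineDerivAt v
  simp only [hadd] at hD
  exact hD.unique (by simpa using ((hasDerivAt_id (0 : ℝ)).mul_const c).const_add (f x))

theorem le_fderiv_apply_of_monotone_of_map_add_const {ι : Type*} [Finite ι] {M : (ι → ℝ) → ℝ}
    {t v : ι → ℝ} {c : ℝ} (hM : DifferentiableAt ℝ M t) (hmono : Monotone M)
    (hadd : ∀ t c, M (t + Function.const ι c) = M t + c) (hv : ∀ j, c ≤ v j) :
    c ≤ fderiv ℝ M t v := by
  cases nonempty_fintype ι
  have hconst : fderiv ℝ M t (Function.const ι c) = c :=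
    fderiv_apply_eq_of_forall_add_smul hM fun s => hadd t (s * c)
  have hdiff : 0 ≤ fderiv ℝ M t (v - Function.const ι c) :=
    fderiv_apply_nonneg_of_monotone hM hmono (sub_nonneg.2 hv)
  rw [map_sub, hconst] at hdiff
  exact sub_nonneg.1 hdiff

end Derivatives

section LeviForm

variable {E : Type*} [NormedAddCommGroup E] [NormedSpace ℂ E]

/-- The Levi form (complex Hessian) at `z` of a real-valued function `f` on `s`, as a quadratic
form in `ξ`, expressed through the real second derivative. -/
noncomputable def leviFormWithin (f : E → ℝ) (s : Set E) (z ξ : E) : ℝ :=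
  (1 / 4) * (iteratedFDerivWithin ℝ 2 f s z ![ξ, ξ] +
    iteratedFDerivWithin ℝ 2 f s z ![Complex.I • ξ, Complex.I • ξ])

theorem le_leviFormWithin_comp {ι : Type*} [Fintype ι] {M : (ι → ℝ) → ℝ} (hM : ContDiff ℝ 2 M)
    (hmono : Monotone M) (hconv : ConvexOn ℝ Set.univ M)
    (hadd : ∀ t c, M (t + Function.const ι c) = M t + c) {s : Set E} (hs : UniqueDiffOn ℝ s)
    {u : ι → E → ℝ} (hu : ∀ j, ContDiffOn ℝ 2 (u j) s) {z ξ : E} (hz : z ∈ s) {c : ℝ}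
    (hc : ∀ j, c ≤ leviFormWithin (u j) s z ξ) :
    c ≤ leviFormWithin (fun z => M (fun j => u j z)) s z ξ := by
  set U : E → ι → ℝ := fun z j => u j z
  have hU : ContDiffOn ℝ 2 U s := contDiffOn_pi.2 hu
  set H : E → ι → ℝ := fun ζ => iteratedFDerivWithin ℝ 2 U s z ![ζ, ζ]
  have hH : ∀ ζ j, iteratedFDerivWithin ℝ 2 (u j) s z ![ζ, ζ] = H ζ j := fun ζ j =>
    DFunLike.congr_fun (ContinuousLinearMap.iteratedFDerivWithin_comp_left
      (.proj (R := ℝ) (φ := fun _ : ι => ℝ) j) (hU z hz) hs hz le_rfl) ![ζ, ζ]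
  have hessian_ge (ζ : E) :
      fderiv ℝ M (U z) (H ζ) ≤ iteratedFDerivWithin ℝ 2 (M ∘ U) s z ![ζ, ζ] := by
    rw [iteratedFDerivWithin_two_comp_apply hM hU hs hz]
    exact le_add_of_nonneg_left (iteratedFDeriv_two_nonneg_of_convexOn hM hconv _ _)
  calc
    c ≤ fderiv ℝ M (U z) ((1 / 4 : ℝ) • (H ξ + H (Complex.I • ξ))) := by
      refine le_fderiv_apply_of_monotone_of_map_add_const (hM.differentiable two_ne_zero _) hmono
        hadd fun j => ?_
      simpa only [leviFormWithin, hH, Pi.smul_apply, Pi.add_apply, smul_eq_mul] using hc j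
    _ = (1 / 4) * (fderiv ℝ M (U z) (H ξ) + fderiv ℝ M (U z) (H (Complex.I • ξ))) := by
      rw [map_smul, map_add, smul_eq_mul]
    _ ≤ leviFormWithin (M ∘ U) s z ξ := by
      unfold leviFormWithin
      gcongr <;> exact hessian_ge _

end LeviForm

section Mollifier

/-- A `Cⁿ` mollifier: a compactly supported probability density of class `Cⁿ`. -/
structure IsMollifier {E : Type*} [NormedAddCommGroup E] [NormedSpace ℝ E] [MeasureSpace E]
    (n : ℕ∞) (K : E → ℝ) : Prop where
  contDiff : ContDiff ℝ n K
  hasCompactSupport : HasCompactSupport K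
  nonneg : ∀ h, 0 ≤ K h
  integral_eq_one : ∫ h, K h = 1

theorem IsMollifier.rescale {n : ℕ∞} {ρ : ℝ → ℝ} (hρ : IsMollifier n ρ) {η : ℝ} (hη : 0 < η) :
    IsMollifier n fun x => η⁻¹ * ρ (x / η) where
  contDiff := contDiff_const.mul (hρ.contDiff.comp (contDiff_id.div_const η))
  hasCompactSupport := by
    have hcomp : HasCompactSupport fun x => ρ (x / η) := by
      simpa only [smul_eq_mul, inv_mul_eq_div] using
        hρ.hasCompactSupport.comp_smul (inv_ne_zero hη.ne')
    exact hcomp.mul_left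
  nonneg x := mul_nonneg (inv_nonneg.2 hη.le) (hρ.nonneg _)
  integral_eq_one := by
    rw [integral_const_mul, Measure.integral_comp_div, hρ.integral_eq_one, abs_of_pos hη,
      smul_eq_mul, mul_one, inv_mul_cancel₀ hη.ne']

theorem IsMollifier.prod {n : ℕ∞} {ι : Type*} [Fintype ι] {E : ι → Type*}
    [∀ j, NormedAddCommGroup (E j)] [∀ j, NormedSpace ℝ (E j)] [∀ j, MeasureSpace (E j)]
    [∀ j, SigmaFinite (volume : Measure (E j))] {K : ∀ j, E j → ℝ}
    (hK : ∀ j, IsMollifier n (K j)) : IsMollifier n fun h : ∀ j, E j => ∏ j, K j (h j) where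
  contDiff := contDiff_prod fun j _ =>
    (hK j).contDiff.comp (ContinuousLinearMap.proj (R := ℝ) (φ := E) j).contDiff
  hasCompactSupport := by
    refine HasCompactSupport.intro (K := Set.univ.pi fun j => tsupport (K j))
      (isCompact_univ_pi fun j => (hK j).hasCompactSupport) fun h hh => ?_
    obtain ⟨j, hj⟩ : ∃ j, h j ∉ tsupport (K j) := by simpa [Set.mem_univ_pi] using hh
    exact Finset.prod_eq_zero (Finset.mem_univ j) (image_eq_zero_of_notMem_tsupport hj)
  nonneg h := Finset.prod_nonneg fun j _ => (hK j).nonneg _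
  integral_eq_one := by
    simp only [integral_fintype_prod_volume_eq_prod, (hK _).integral_eq_one, Finset.prod_const_one]

variable {E : Type*} [NormedAddCommGroup E] [NormedSpace ℝ E] [MeasureSpace E] [BorelSpace E]
  {φ K : E → ℝ} {n : ℕ∞}

/-- The average of the translates of `φ` weighted by the kernel `K`. In contrast with a
convolution, the argument of `φ` is `t + h` and not `t - h`. -/
noncomputable def mollify (φ K : E → ℝ) (t : E) : ℝ := ∫ h, φ (t + h) * K h

theorem IsMollifier.integrable [IsFiniteMeasureOnCompacts (volume : Measure E)]
    (hK : IsMollifier n K) : Integrable K :=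
  hK.contDiff.continuous.integrable_of_hasCompactSupport hK.hasCompactSupport

theorem IsMollifier.integrable_translate_mul [IsFiniteMeasureOnCompacts (volume : Measure E)]
    (hK : IsMollifier n K) (hφ : Continuous φ) (t : E) : Integrable fun h => φ (t + h) * K h :=
  ((hφ.comp (continuous_const_add t)).mul hK.contDiff.continuous).integrable_of_hasCompactSupport
    hK.hasCompactSupport.mul_left

theorem contDiff_mollify [(volume : Measure E).IsAddHaarMeasure]
    (hφ : LocallyIntegrable φ) (hK : IsMollifier n K) : ContDiff ℝ n (mollify φ K) := by
  have hsupp : HasCompactSupport fun x => K (-x) :=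
    hK.hasCompactSupport.comp_homeomorph (Homeomorph.neg E)
  have hconv := hsupp.contDiff_convolution_right (ContinuousLinearMap.mul ℝ ℝ) (μ := volume) hφ
    (hK.contDiff.comp contDiff_neg)
  convert hconv using 1
  ext t
  rw [convolution_def, ← integral_add_left_eq_self _ t]
  simp [mollify]

theorem monotone_mollify [IsFiniteMeasureOnCompacts (volume : Measure E)] [PartialOrder E]
    [IsOrderedAddMonoid E] (hφ : Continuous φ) (hmono : Monotone φ) (hK : IsMollifier n K) :
    Monotone (mollify φ K) := fun s t hst =>
  integral_mono (hK.integrable_translate_mul hφ s) (hK.integrable_translate_mul hφ t)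
    fun h => mul_le_mul_of_nonneg_right (hmono (by gcongr)) (hK.nonneg h)

theorem convexOn_mollify [IsFiniteMeasureOnCompacts (volume : Measure E)] (hφ : Continuous φ)
    (hconv : ConvexOn ℝ Set.univ φ) (hK : IsMollifier n K) :
    ConvexOn ℝ Set.univ (mollify φ K) := by
  refine ⟨convex_univ, fun x _ y _ a b ha hb hab => ?_⟩
  have hx := (hK.integrable_translate_mul hφ x).const_mul a
  have hy := (hK.integrable_translate_mul hφ y).const_mul b
  simp only [mollify, smul_eq_mul]
  rw [← integral_const_mul, ← integral_const_mul, ← integral_add hx hy]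
  refine integral_mono (hK.integrable_translate_mul hφ _) (hx.add hy) fun h => ?_
  have translate : a • x + b • y + h = a • (x + h) + b • (y + h) := by
    rw [smul_add, smul_add, add_add_add_comm, ← add_smul, hab, one_smul]
  calc
    φ (a • x + b • y + h) * K h ≤ (a • φ (x + h) + b • φ (y + h)) * K h := by
      rw [translate]
      exact mul_le_mul_of_nonneg_right (hconv.2 trivial trivial ha hb hab) (hK.nonneg h)
    _ = a * (φ (x + h) * K h) + b * (φ (y + h) * K h) := by
      simp only [smul_eq_mul]
      ring

theorem mollify_add_of_forall_map_add [IsFiniteMeasureOnCompacts (volume : Measure E)]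
    (hφ : Continuous φ) (hK : IsMollifier n K) {v : E} {c : ℝ} (hadd : ∀ t, φ (t + v) = φ t + c)
    (t : E) : mollify φ K (t + v) = mollify φ K t + c := by
  simp only [mollify, add_right_comm t v, hadd, add_mul]
  rw [integral_add (hK.integrable_translate_mul hφ t) (hK.integrable.const_mul c),
    integral_const_mul, hK.integral_eq_one, mul_one]

end Mollifier

section RegularizedMax

variable {ι : Type*}

theorem continuous_iSup_apply [Finite ι] [Nonempty ι] : Continuous fun t : ι → ℝ => ⨆ j, t j := by
  cases nonempty_fintype ι
  simp_rw [← Finset.sup'_univ_eq_ciSup]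
  exact Continuous.finset_sup'_apply _ fun j _ => continuous_apply j

theorem monotone_iSup_apply [Finite ι] : Monotone fun t : ι → ℝ => ⨆ j, t j :=
  fun _ _ h => Finite.ciSup_mono h

theorem convexOn_iSup_apply [Finite ι] [Nonempty ι] :
    ConvexOn ℝ Set.univ fun t : ι → ℝ => ⨆ j, t j := by
  refine ⟨convex_univ, fun x _ y _ a b ha hb _ => ciSup_le fun j => ?_⟩
  simp only [Pi.add_apply, Pi.smul_apply]
  gcongr <;> exact le_ciSup (Set.finite_range _).bddAbove j

theorem iSup_add_const_apply [Finite ι] [Nonempty ι] (t : ι → ℝ) (c : ℝ) :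
    ⨆ j, (t + Function.const ι c) j = (⨆ j, t j) + c :=
  (ciSup_add (Set.finite_range t).bddAbove c).symm

/-- The maximum of finitely many real numbers, regularized by the kernel `K`; for
`K h = ∏ j, (η j)⁻¹ * ρ (h j / η j)` this is `M_η`. -/
noncomputable def regularizedMax [Fintype ι] (K : (ι → ℝ) → ℝ) : (ι → ℝ) → ℝ :=
  mollify (fun t => ⨆ j, t j) K

theorem regularized_max_levi_form_general [Fintype ι] [Nonempty ι] {E : Type*}
    [NormedAddCommGroup E] [NormedSpace ℂ E] {K : (ι → ℝ) → ℝ} (hK : IsMollifier 2 K)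
    {s : Set E} (hs : UniqueDiffOn ℝ s) {u : ι → E → ℝ} (hu : ∀ j, ContDiffOn ℝ 2 (u j) s)
    {γ : E → E → ℝ} (hγ : ∀ j, ∀ z ∈ s, ∀ ξ, γ z ξ ≤ leviFormWithin (u j) s z ξ) :
    ContDiffOn ℝ 2 (fun z => regularizedMax K fun j => u j z) s ∧
      ∀ z ∈ s, ∀ ξ, γ z ξ ≤ leviFormWithin (fun z => regularizedMax K fun j => u j z) s z ξ := by
  have hcont : Continuous fun t : ι → ℝ => ⨆ j, t j := continuous_iSup_apply
  have hsmooth : ContDiff ℝ 2 (regularizedMax K) := contDiff_mollify hcont.locallyIntegrable hK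
  exact ⟨hsmooth.comp_contDiffOn (contDiffOn_pi.2 hu), fun z hz ξ =>
    le_leviFormWithin_comp hsmooth (monotone_mollify hcont monotone_iSup_apply hK)
      (convexOn_mollify hcont convexOn_iSup_apply hK)
      (fun t c => mollify_add_of_forall_map_add hcont hK (iSup_add_const_apply · c) t)
      hs hu hz fun j => hγ j z hz ξ⟩

end RegularizedMax

/-- **The regularized maximum preserves lower bounds on Levi forms.**
Let `Ω ⊆ ℂⁿ` be open, `u₁, …, u_p : Ω → ℝ` of class `C²`, and `γ : Ω × ℂⁿ → ℝ` with
`(1/4)(D²u_j(z)(ξ,ξ) + D²u_j(z)(iξ,iξ)) ≥ γ(z,ξ)` for all `j`, `z ∈ Ω`, `ξ ∈ ℂⁿ`.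
Then `u(z) = M_η(u₁(z), …, u_p(z))` is `C²` on `Ω` and satisfies the same lower bound. -/
theorem regularized_max_levi_form
    (ρ : ℝ → ℝ)
    (hρ_smooth : ContDiff ℝ (⊤ : ℕ∞) ρ)
    (hρ_nonneg : ∀ x, 0 ≤ ρ x)
    (hρ_supp : Function.support ρ ⊆ Set.Icc (-1 : ℝ) 1)
    (hρ_int : ∫ x : ℝ, ρ x = 1)
    (hρ_mean : ∫ x : ℝ, x * ρ x = 0)
    (p : ℕ) (hp : 1 ≤ p)
    (η : Fin p → ℝ) (hη : ∀ j, 0 < η j)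
    (M : (Fin p → ℝ) → ℝ)
    (hM : ∀ t : Fin p → ℝ,
      M t = ∫ h : Fin p → ℝ,
        (⨆ j, (t j + h j)) * ∏ j, (η j)⁻¹ * ρ (h j / η j))
    (n : ℕ)
    (Ω : Set (Fin n → ℂ)) (hΩ : IsOpen Ω)
    (u : Fin p → (Fin n → ℂ) → ℝ)
    (hu : ∀ j, ContDiffOn ℝ 2 (u j) Ω)
    (γ : (Fin n → ℂ) → (Fin n → ℂ) → ℝ)
    (hγ : ∀ (j : Fin p), ∀ z ∈ Ω, ∀ ξ : Fin n → ℂ,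
      γ z ξ ≤ (1 / 4) *
        (iteratedFDerivWithin ℝ 2 (u j) Ω z ![ξ, ξ] +
          iteratedFDerivWithin ℝ 2 (u j) Ω z ![Complex.I • ξ, Complex.I • ξ])) :
    ContDiffOn ℝ 2 (fun z => M (fun j => u j z)) Ω ∧
      ∀ z ∈ Ω, ∀ ξ : Fin n → ℂ,
        γ z ξ ≤ (1 / 4) *
          (iteratedFDerivWithin ℝ 2 (fun z => M (fun j => u j z)) Ω z ![ξ, ξ] +
            iteratedFDerivWithin ℝ 2 (fun z => M (fun j => u j z)) Ω z
              ![Complex.I • ξ, Complex.I • ξ]) := by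
  have hρ : IsMollifier 2 ρ :=
    ⟨hρ_smooth.of_le (mod_cast le_top), .of_support_subset_isCompact isCompact_Icc hρ_supp,
      hρ_nonneg, hρ_int⟩
  have : Nonempty (Fin p) := ⟨⟨0, hp⟩⟩
  obtain rfl : M = regularizedMax _ := funext hM
  exact regularized_max_levi_form_general (.prod fun j => hρ.rescale (hη j)) hΩ.uniqueDiffOn hu hγ
end

section
/- Decomposition of Hermitian matrices with pinched spectrum into rank-one projections: for every n ≥ 1 and all real numbers 0 < λ < Λ < ∞, there exist an integer N ≥ 1, unit vectors ζ_1,…,ζ_N ∈ ℂ^n, and real numbers 0 < λ_* < Λ_* < ∞, all depending only on n, λ and Λ, such that every Hermitian n×n complex matrix A all of whose eigenvalues lie in the interval [λ,Λ] can be written as A = ∑_{k=1}^N β_k ζ_k ζ_k^*, i.e. a_{ij} = ∑_{k=1}^N β_k ζ_{ki} \overline{ζ_{kj}}, with coefficients β_k ∈ [λ_*, Λ_*]. Moreover, the vectors ζ_1,…,ζ_N can be chosen so that they contain any prescribed orthonormal basis of ℂ^n. -/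
/-!
In the real normed space of Hermitian matrices with the operator norm, the matrices with spectrum in
`[λ, Λ]` form the closed ball of radius `(Λ - λ) / 2` about `(λ + Λ) / 2 • 1`. This compact convex
set lies in the open ball of radius `(λ + Λ) / 2`, whose elements are positive semidefinite, hence
in the interior of the cone generated by the rank-one projections. By compactness, finitely many of
these projections already generate a cone containing a neighbourhood of the closed ball. To bound
the coefficients from below, subtract a small multiple `ε` of the sum of all chosen projections
(the prescribed ones included), decompose, and add it back. The upper bound `β k ≤ Λ` follows from
`β k • ζ k (ζ k)* ≤ A ≤ Λ • 1` by testing against `ζ k`.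
-/

open Matrix Metric Set

section Cone

variable {E α : Type*} [NormedAddCommGroup E] [NormedSpace ℝ E] [FiniteDimensional ℝ E]
  {v : α → E} {s : Set α} {K : Set E}

theorem exists_finset_subset_hull_image (hK : IsCompact K) (hconv : Convex ℝ K)
    (hKv : K ⊆ interior (PointedCone.hull ℝ (v '' s))) :
    ∃ S : Finset α, (S : Set α) ⊆ s ∧ K ⊆ PointedCone.hull ℝ (v '' S) := by
  classical
  obtain ⟨u, hKu, hu⟩ := hconv.exists_subset_interior_convexHull_finset_of_isCompact hK
    (subset_interior_iff_mem_nhdsSet.1 hKv)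
  obtain ⟨T, hT, huT⟩ :=
    Submodule.subset_span_finite_of_subset_span ((subset_convexHull ℝ _).trans hu)
  obtain ⟨S, hSs, rfl⟩ := Finset.subset_set_image_iff.1 hT
  refine ⟨S, hSs, hKu.trans <| interior_subset.trans <|
    convexHull_min ?_ (PointedCone.convex _)⟩
  rwa [← Finset.coe_image]

theorem exists_combination_coeff_ge {κ : Type*} [Finite κ] {b : κ → α} (hb : ∀ i, b i ∈ s)
    (hK : IsCompact K) (hconv : Convex ℝ K) (hKv : K ⊆ interior (PointedCone.hull ℝ (v '' s))) :
    ∃ (N : ℕ) (a : Fin N → α) (ε : ℝ), 0 < ε ∧ (∀ k, a k ∈ s) ∧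
      (∃ ι : κ → Fin N, Function.Injective ι ∧ ∀ i, a (ι i) = b i) ∧
      ∀ x ∈ K, ∃ c : Fin N → ℝ, (∀ k, ε ≤ c k) ∧ x = ∑ k, c k • v (a k) := by
  have := Fintype.ofFinite κ
  have := FiniteDimensional.proper_real E
  obtain ⟨δ, hδ, hδK⟩ := hK.exists_cthickening_subset_open isOpen_interior hKv
  obtain ⟨S, hSs, hS⟩ := exists_finset_subset_hull_image hK.cthickening (hconv.cthickening δ) hδK
  let d : S ⊕ κ → α := Sum.elim (↑) b
  have hd : ∀ k, d k ∈ s := Sum.forall.2 ⟨fun k ↦ hSs k.2, hb⟩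
  let w : E := ∑ k, v (d k)
  obtain ⟨ε, hε, hεw⟩ := exists_pos_mul_lt hδ ‖w‖
  let e := Fintype.equivFin (S ⊕ κ)
  refine ⟨_, d ∘ e.symm, ε, hε, fun k ↦ hd _,
    ⟨e ∘ Sum.inr, e.injective.comp Sum.inr_injective, fun i ↦ by simp [d]⟩, fun x hx ↦ ?_⟩
  have hxw : x - ε • w ∈ cthickening δ K := by
    refine mem_cthickening_of_dist_le _ x δ K hx ?_
    simpa [dist_eq_norm, norm_smul, abs_of_pos hε, mul_comm] using hεw.le
  obtain ⟨c, hc⟩ := (Submodule.mem_span_image_finset_iff_exists_fun _).1 (hS hxw)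
  replace hc : ∑ k, (c k : ℝ) • v k = x - ε • w := hc
  let c' : S ⊕ κ → ℝ := Sum.elim (fun k ↦ c k) 0
  have hc' : ∀ k, 0 ≤ c' k := Sum.forall.2 ⟨fun k ↦ (c k).2, fun _ ↦ le_rfl⟩
  refine ⟨fun k ↦ c' (e.symm k) + ε, fun k ↦ le_add_of_nonneg_left (hc' _), ?_⟩
  calc x
    _ = ∑ k, (c k : ℝ) • v k + ε • w := by rw [hc, sub_add_cancel]
    _ = ∑ k, c' k • v (d k) + ε • w := by simp [Fintype.sum_sum_type, c', d]
    _ = ∑ k, (c' k + ε) • v (d k) := by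
      simp only [add_smul, Finset.sum_add_distrib, ← Finset.smul_sum, w]
    _ = ∑ k, (c' (e.symm k) + ε) • v (d (e.symm k)) :=
      (e.symm.sum_comp fun k ↦ (c' k + ε) • v (d k)).symm

end Cone

theorem mem_closedBall_algebraMap_iff_spectrum_subset {𝕜 A : Type*} {p : A → Prop} [RCLike 𝕜]
    [NormedRing A] [StarRing A] [NormedAlgebra 𝕜 A] [IsometricContinuousFunctionalCalculus 𝕜 A p]
    {a : A} (ha : p a) {c : 𝕜} {r : ℝ} (hr : 0 ≤ r) :
    a ∈ closedBall (algebraMap 𝕜 A c) r ↔ spectrum 𝕜 a ⊆ closedBall c r := by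
  have hcfc : a - algebraMap 𝕜 A c = cfc (fun x ↦ x - c) a := by
    rw [cfc_sub .., cfc_id' 𝕜 a, cfc_const c a]
  rw [mem_closedBall_iff_norm, hcfc, norm_cfc_le_iff _ a hr]
  simp only [subset_def, mem_closedBall_iff_norm]

section Hermitian

variable {𝕜 m : Type*} [RCLike 𝕜]

/-- The rank-one Hermitian matrix `v v*`, as an element of the real vector space of Hermitian
matrices: there, unlike among all matrices, the positive semidefinite cone has interior. -/
def hermitianRankOne (v : m → 𝕜) : selfAdjoint (Matrix m m 𝕜) :=
  ⟨vecMulVec v (star v), by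
    rw [selfAdjoint.mem_iff, star_eq_conjTranspose, conjTranspose_vecMulVec, star_star]⟩

theorem hermitianRankOne_smul (r : ℝ) (v : m → 𝕜) :
    hermitianRankOne (r • v) = r ^ 2 • hermitianRankOne v := by
  ext1
  change vecMulVec (r • v) (star (r • v)) = r ^ 2 • vecMulVec v (star v)
  rw [star_smul, star_trivial, vecMulVec_smul, smul_vecMulVec, smul_smul, sq]

instance finiteDimensional_selfAdjoint_matrix [Finite m] :
    FiniteDimensional ℝ (selfAdjoint (Matrix m m 𝕜)) :=
  inferInstanceAs (FiniteDimensional ℝ (selfAdjoint.submodule ℝ (Matrix m m 𝕜)))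

variable [Fintype m]

theorem exists_eq_smul_star_dotProduct_self_eq_one {v : m → 𝕜} (hv : v ≠ 0) :
    ∃ (r : ℝ) (u : m → 𝕜), star u ⬝ᵥ u = 1 ∧ v = r • u := by
  have hr : ‖WithLp.toLp 2 v‖ ≠ 0 := by simpa using hv
  refine ⟨‖WithLp.toLp 2 v‖, ‖WithLp.toLp 2 v‖⁻¹ • v, ?_, (smul_inv_smul₀ hr v).symm⟩
  have hvv : star v ⬝ᵥ v = (‖WithLp.toLp 2 v‖ ^ 2 : ℝ) := by
    rw [dotProduct_comm, ← EuclideanSpace.inner_toLp_toLp, inner_self_eq_norm_sq_to_K]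
    simp
  rw [star_smul, star_trivial, smul_dotProduct, dotProduct_smul, hvv]
  simp only [RCLike.real_smul_eq_coe_mul, ← RCLike.ofReal_mul]
  rw [← RCLike.ofReal_one, RCLike.ofReal_inj]
  field_simp

variable (𝕜 m) in
/-- The convex cone of Hermitian matrices generated by the orthogonal projections `u u*`, where `u`
ranges over the unit vectors. -/
noncomputable def rankOneProjectionCone : PointedCone ℝ (selfAdjoint (Matrix m m 𝕜)) :=
  PointedCone.hull ℝ (hermitianRankOne '' {u : m → 𝕜 | star u ⬝ᵥ u = 1})

theorem hermitianRankOne_mem_rankOneProjectionCone (v : m → 𝕜) :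
    hermitianRankOne v ∈ rankOneProjectionCone 𝕜 m := by
  rcases eq_or_ne v 0 with rfl | hv
  · convert! Submodule.zero_mem _
    simpa using hermitianRankOne_smul 0 (0 : m → 𝕜)
  · obtain ⟨r, u, hu, rfl⟩ := exists_eq_smul_star_dotProduct_self_eq_one hv
    rw [hermitianRankOne_smul]
    exact Submodule.smul_mem _ (⟨r ^ 2, sq_nonneg r⟩ : {c : ℝ // 0 ≤ c})
      (Submodule.subset_span (mem_image_of_mem _ hu))

open scoped ComplexOrder in
theorem mem_rankOneProjectionCone_of_posSemidef {x : selfAdjoint (Matrix m m 𝕜)}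
    (hx : x.1.PosSemidef) :
    x ∈ rankOneProjectionCone 𝕜 m := by
  obtain ⟨N, v, hv⟩ := posSemidef_iff_eq_sum_vecMulVec.1 hx
  have hxv : x = ∑ k, hermitianRankOne (v k) := by
    ext1
    simpa [hermitianRankOne] using hv
  rw [hxv]
  exact Submodule.sum_mem _ fun k _ ↦ hermitianRankOne_mem_rankOneProjectionCone (v k)

variable [DecidableEq m]

open scoped Matrix.Norms.L2Operator

noncomputable local instance normedAlgebra_real_matrix : NormedAlgebra ℝ (Matrix m m 𝕜) where
  norm_smul_le r A := by
    rw [RCLike.real_smul_eq_coe_smul (K := 𝕜), ← norm_algebraMap' 𝕜 r]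
    exact norm_smul_le _ _

theorem mem_closedBall_iff_forall_eigenvalues {A : Matrix m m 𝕜} (hA : A.IsHermitian)
    {c r : ℝ} (hr : 0 ≤ r) :
    A ∈ closedBall (algebraMap ℝ _ c) r ↔ ∀ i, hA.eigenvalues i ∈ closedBall c r := by
  rw [mem_closedBall_algebraMap_iff_spectrum_subset hA.isSelfAdjoint hr,
    hA.spectrum_real_eq_range_eigenvalues, range_subset_iff]

theorem ball_subset_rankOneProjectionCone (c : ℝ) :
    ball (c • (1 : selfAdjoint (Matrix m m 𝕜))) c ⊆ rankOneProjectionCone 𝕜 m := by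
  intro x hx
  have hxH : x.1.IsHermitian := x.2
  have hc : 0 ≤ c := (pos_of_mem_ball hx).le
  refine mem_rankOneProjectionCone_of_posSemidef <|
    hxH.posSemidef_iff_eigenvalues_nonneg.2 fun i ↦ ?_
  have hxc : x.1 ∈ closedBall (algebraMap ℝ _ c) c := by
    rw [Algebra.algebraMap_eq_smul_one]
    exact ball_subset_closedBall hx
  have := (mem_closedBall_iff_forall_eigenvalues hxH hc).1 hxc i
  rw [Real.closedBall_eq_Icc, sub_self] at this
  exact this.1

open scoped MatrixOrder ComplexOrder in
theorem coeff_le_of_forall_eigenvalues_le {κ : Type*} [Fintype κ] {ζ : κ → m → 𝕜} {β : κ → ℝ}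
    {A : Matrix m m 𝕜} (hA : A.IsHermitian) (hβ : ∀ k, 0 ≤ β k)
    (hAβ : A = ∑ k, β k • vecMulVec (ζ k) (star (ζ k))) {c : ℝ}
    (hc : ∀ i, hA.eigenvalues i ≤ c) {k : κ} (hk : star (ζ k) ⬝ᵥ ζ k = 1) : β k ≤ c := by
  have hterm_le : β k • vecMulVec (ζ k) (star (ζ k)) ≤ A := by
    rw [hAβ]
    exact Finset.single_le_sum (f := fun j ↦ β j • vecMulVec (ζ j) (star (ζ j)))
      (fun j _ ↦ smul_nonneg (hβ j) (posSemidef_vecMulVec_self_star (ζ j)).nonneg)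
      (Finset.mem_univ k)
  have hA_le : A ≤ algebraMap ℝ _ c := by
    rw [le_algebraMap_iff_spectrum_le hA.isSelfAdjoint, hA.spectrum_real_eq_range_eigenvalues]
    exact forall_mem_range.2 hc
  have := (le_iff.1 (hterm_le.trans hA_le)).dotProduct_mulVec_nonneg (ζ k)
  rw [Algebra.algebraMap_eq_smul_one, sub_mulVec, smul_mulVec, smul_mulVec, one_mulVec,
    vecMulVec_mulVec, hk] at this
  simpa [dotProduct_sub, hk, RCLike.real_smul_eq_coe_mul] using this

theorem hermitian_pinched_spectrum_rank_one_decomposition_general {κ : Type*} [Finite κ]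
    {lam Lam : ℝ} (hlam : 0 < lam) (hlamLam : lam ≤ Lam)
    {b : κ → m → 𝕜} (hb : ∀ i, star (b i) ⬝ᵥ b i = 1) :
    ∃ (N : ℕ) (ζ : Fin N → m → 𝕜), ∃ lamStar ∈ Ioo 0 lam,
      (∀ k, star (ζ k) ⬝ᵥ ζ k = 1) ∧
      (∃ ι : κ → Fin N, Function.Injective ι ∧ ∀ i, ζ (ι i) = b i) ∧
      ∀ (A : Matrix m m 𝕜) (hA : A.IsHermitian), (∀ i, hA.eigenvalues i ∈ Icc lam Lam) →
        ∃ β : Fin N → ℝ, (∀ k, β k ∈ Icc lamStar Lam) ∧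
          A = ∑ k, β k • vecMulVec (ζ k) (star (ζ k)) := by
  have := FiniteDimensional.proper_real (selfAdjoint (Matrix m m 𝕜))
  let K := closedBall (((lam + Lam) / 2) • (1 : selfAdjoint (Matrix m m 𝕜))) ((Lam - lam) / 2)
  have hK : K ⊆ interior (rankOneProjectionCone 𝕜 m) :=
    (closedBall_subset_ball (by linarith)).trans
      (isOpen_ball.subset_interior_iff.2 (ball_subset_rankOneProjectionCone _))
  obtain ⟨N, ζ, ε, hε, hζ, hι, hdecomp⟩ :=
    exists_combination_coeff_ge hb (isCompact_closedBall _ _) (convex_closedBall _ _) hK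
  refine ⟨N, ζ, min ε (lam / 2), ⟨by positivity, min_lt_of_right_lt (by linarith)⟩, hζ, hι,
    fun A hA hev ↦ ?_⟩
  have hAK : (⟨A, hA⟩ : selfAdjoint (Matrix m m 𝕜)) ∈ K := by
    have := (mem_closedBall_iff_forall_eigenvalues hA (by linarith)).2
      fun i ↦ Real.Icc_eq_closedBall lam Lam ▸ hev i
    rwa [Algebra.algebraMap_eq_smul_one] at this
  obtain ⟨β, hβ, hAβ⟩ := hdecomp _ hAK
  replace hAβ : A = ∑ k, β k • vecMulVec (ζ k) (star (ζ k)) := by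
    simpa [hermitianRankOne] using congrArg Subtype.val hAβ
  exact ⟨β, fun k ↦ ⟨(min_le_left _ _).trans (hβ k), coeff_le_of_forall_eigenvalues_le hA
    (fun j ↦ hε.le.trans (hβ j)) hAβ (fun i ↦ (hev i).2) (hζ k)⟩, hAβ⟩

end Hermitian

theorem sum_normSq_eq_one_of_star_dotProduct_self {m : Type*} [Fintype m] {z : m → ℂ}
    (hz : star z ⬝ᵥ z = 1) : ∑ i, Complex.normSq (z i) = 1 := by
  have : ∑ i, (Complex.normSq (z i) : ℂ) = 1 := by
    simp only [Complex.normSq_eq_conj_mul_self]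
    exact hz
  exact_mod_cast this

/-- **Decomposition of Hermitian matrices with pinched spectrum into rank-one
projections.** For every `n ≥ 1` and `0 < λ < Λ < ∞`, there exist `N ≥ 1`, unit
vectors `ζ₁, …, ζ_N ∈ ℂⁿ` and `0 < λ⋆ < Λ⋆ < ∞`, depending only on `n`, `λ`, `Λ`,
such that every Hermitian `n × n` complex matrix `A` whose eigenvalues all lie in
`[λ, Λ]` can be written `A = ∑ₖ βₖ ζₖ ζₖ*` with `βₖ ∈ [λ⋆, Λ⋆]`; moreover the `ζₖ`
can be chosen to contain any prescribed orthonormal basis of `ℂⁿ`. -/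
theorem hermitian_pinched_spectrum_rank_one_decomposition
    (n : ℕ) (hn : 1 ≤ n)
    (lam Lam : ℝ) (hlam : 0 < lam) (hlamLam : lam < Lam)
    (b : Fin n → (Fin n → ℂ))
    (hb : ∀ i j, ∑ k, (starRingEnd ℂ) (b i k) * b j k = if i = j then 1 else 0) :
    ∃ (N : ℕ), 1 ≤ N ∧
    ∃ (ζ : Fin N → (Fin n → ℂ)) (lamStar LamStar : ℝ),
      0 < lamStar ∧ lamStar < LamStar ∧
      (∀ k, ∑ i, Complex.normSq (ζ k i) = 1) ∧
      (∃ ι : Fin n → Fin N, Function.Injective ι ∧ ∀ i, ζ (ι i) = b i) ∧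
      ∀ (A : Matrix (Fin n) (Fin n) ℂ) (hA : A.IsHermitian),
        (∀ i, hA.eigenvalues i ∈ Set.Icc lam Lam) →
        ∃ β : Fin N → ℝ,
          (∀ k, β k ∈ Set.Icc lamStar LamStar) ∧
          A = ∑ k, (β k : ℂ) • Matrix.of (fun i j => ζ k i * (starRingEnd ℂ) (ζ k j)) := by
  obtain ⟨N, ζ, lamStar, ⟨hpos, hlt⟩, hζ, ⟨ι, hι⟩, hdecomp⟩ :=
    hermitian_pinched_spectrum_rank_one_decomposition_general hlam hlamLam.le
      fun i ↦ (hb i i).trans (if_pos rfl)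
  exact ⟨N, (ι ⟨0, hn⟩).pos, ζ, lamStar, Lam, hpos, hlt.trans hlamLam,
    fun k ↦ sum_normSq_eq_one_of_star_dotProduct_self (hζ k), ⟨ι, hι⟩, hdecomp⟩
end
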